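/- arXiv:1310.2524 — 2 statements merged into one kernel-verified Lean document; each statement's English description precedes it below -/
import Mathlib

section
/- Let H be a complex Hilbert space and let N and Q be bounded linear operators on H with NQ = QN and Q s.o.t.-quasinilpotent, and set T = N + Q. Then for every polynomial q with complex coefficients, q(T) and q(N) commute, and q(T) − q(N) is s.o.t.-quasinilpotent. -/
/-!
Since `T - N = Q` commutes with `N`, telescoping gives `q(T) - q(N) = S * Q` with `S` commuting
with `Q`. It therefore suffices that s.o.t.-quasinilpotence of `Q` passes to `S * Q` whenever `S`
commutes with `Q`. With `R = S * Q` one has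
`(R*)ⁿRⁿ = (Q*)ⁿ(S*)ⁿSⁿQⁿ ≤ (‖S‖²)ⁿ (Q*)ⁿQⁿ`, and since `t ↦ t^{1/n}` is operator monotone
(Löwner–Heinz), `((R*)ⁿRⁿ)^{1/n} ≤ ‖S‖² ((Q*)ⁿQⁿ)^{1/n}`. The left-hand sides are positive and
bounded in norm by `‖R‖²`, and a bounded sequence of positive operators dominated by a sequence
tending strongly to zero tends strongly to zero, by `‖Aξ‖² ≤ ‖A‖ ⟨Aξ, ξ⟩`.
-/

open scoped NNReal

/-- A bounded operator `Q` on a complex Hilbert space is s.o.t.-quasinilpotent if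
`((Q*)ⁿQⁿ)^{1/n} → 0` in the strong operator topology, the `n`-th roots being taken via
continuous functional calculus. -/
def SotQuasinilpotent {H : Type*} [NormedAddCommGroup H] [InnerProductSpace ℂ H]
    [CompleteSpace H] (Q : H →L[ℂ] H) : Prop :=
  ∀ ξ : H, Filter.Tendsto
    (fun n : ℕ =>
      (CFC.nnrpow ((ContinuousLinearMap.adjoint Q) ^ n * Q ^ n) ((n : ℝ≥0)⁻¹)) ξ)
    Filter.atTop (nhds 0)

section

variable {H : Type*} [NormedAddCommGroup H] [InnerProductSpace ℂ H] [CompleteSpace H]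

lemma norm_apply_sq_le_of_nonneg {A : H →L[ℂ] H} (hA : 0 ≤ A) (x : H) :
    ‖A x‖ ^ 2 ≤ ‖A‖ * RCLike.re (inner ℂ (A x) x) := by
  set B := CFC.sqrt A with hB
  have hBB : B * B = A := CFC.sqrt_mul_sqrt_self A hA
  have hBs : IsSelfAdjoint B := IsSelfAdjoint.of_nonneg (CFC.sqrt_nonneg A)
  have hn : ‖A‖ = ‖B‖ ^ 2 := by
    rw [← hBB, sq, ← CStarRing.norm_star_mul_self, hBs.star_eq]
  have hx : RCLike.re (inner ℂ (A x) x) = ‖B x‖ ^ 2 := by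
    rw [← hBB, ContinuousLinearMap.mul_def, ContinuousLinearMap.comp_apply, ← ContinuousLinearMap.adjoint_inner_right,
      ← ContinuousLinearMap.star_eq_adjoint, hBs.star_eq, inner_self_eq_norm_sq]
  rw [hn, hx, ← mul_pow, ← hBB]
  gcongr
  exact B.le_opNorm _

/-- Löwner–Heinz for `n`-th roots, with a scalar factor taken out of the root. -/
lemma nnrpow_inv_le_smul {A B : H →L[ℂ] H} (hB : 0 ≤ B) {c : ℝ} (hc : 0 ≤ c) {n : ℕ}
    (hn : n ≠ 0) (h : A ≤ c ^ n • B) :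
    CFC.nnrpow A ((n : ℝ≥0)⁻¹) ≤ c • CFC.nnrpow B ((n : ℝ≥0)⁻¹) := by
  have hn' : (n : ℝ≥0) ≠ 0 := by exact_mod_cast hn
  simp only [CFC.nnrpow_eq_pow]
  have h0 : 0 ≤ c • B ^ ((n : ℝ≥0)⁻¹) := smul_nonneg hc CFC.nnrpow_nonneg
  have hX : (c ^ n • B) ^ ((n : ℝ≥0)⁻¹) = c • B ^ ((n : ℝ≥0)⁻¹) := by
    rw [CFC.nnrpow_inv_eq _ _ hn' (smul_nonneg (pow_nonneg hc n) hB) h0,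
      CFC.nnrpow_eq_rpow (by positivity), NNReal.coe_natCast, CFC.rpow_natCast _ _ h0, smul_pow,
      ← CFC.rpow_natCast (B ^ ((n : ℝ≥0)⁻¹)) _ CFC.nnrpow_nonneg, ← NNReal.coe_natCast,
      ← CFC.nnrpow_eq_rpow (by positivity), CFC.nnrpow_inv_nnrpow _ hn' hB]
  rw [← hX]
  refine CFC.nnrpow_le_nnrpow ⟨zero_le, ?_⟩ h
  exact inv_le_one_of_one_le₀ (by exact_mod_cast Nat.one_le_iff_ne_zero.mpr hn)

lemma adjoint_pow_mul_pow_nonneg (R : H →L[ℂ] H) (n : ℕ) :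
    0 ≤ (ContinuousLinearMap.adjoint R) ^ n * R ^ n := by
  rw [← ContinuousLinearMap.star_eq_adjoint, ← star_pow]
  exact star_mul_self_nonneg _

lemma norm_nnrpow_adjoint_pow_le (R : H →L[ℂ] H) {n : ℕ} (hn : n ≠ 0) :
    ‖CFC.nnrpow ((ContinuousLinearMap.adjoint R) ^ n * R ^ n) ((n : ℝ≥0)⁻¹)‖ ≤ ‖R‖ ^ 2 := by
  rw [CFC.nnrpow_eq_pow, CFC.norm_nnrpow _ (by positivity) (adjoint_pow_mul_pow_nonneg R n),
    ← ContinuousLinearMap.star_eq_adjoint, ← star_pow, CStarRing.norm_star_mul_self]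
  have h : ‖R ^ n‖ * ‖R ^ n‖ ≤ (‖R‖ ^ 2) ^ n := by
    have := norm_pow_le' R (Nat.pos_of_ne_zero hn)
    calc ‖R ^ n‖ * ‖R ^ n‖ ≤ ‖R‖ ^ n * ‖R‖ ^ n := by gcongr
      _ = _ := by ring
  calc _ ≤ ((‖R‖ ^ 2) ^ n) ^ (((n : ℝ≥0)⁻¹ : ℝ≥0) : ℝ) := by gcongr
    _ = _ := by
      rw [NNReal.coe_inv, NNReal.coe_natCast, Real.pow_rpow_inv_natCast (by positivity) hn]

lemma adjoint_pow_mul_pow_le {S Q : H →L[ℂ] H} (h : Commute S Q) {n : ℕ} (hn : n ≠ 0) :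
    (ContinuousLinearMap.adjoint (S * Q)) ^ n * (S * Q) ^ n ≤
      (‖S‖ ^ 2) ^ n • ((ContinuousLinearMap.adjoint Q) ^ n * Q ^ n) := by
  simp only [← ContinuousLinearMap.star_eq_adjoint, ← star_pow]
  have h1 : star ((S * Q) ^ n) * (S * Q) ^ n = star (Q ^ n) * (star (S ^ n) * S ^ n) * Q ^ n := by
    rw [h.mul_pow, star_mul]
    simp only [mul_assoc]
  have h2 : star (S ^ n) * S ^ n ≤ algebraMap ℝ (H →L[ℂ] H) ((‖S‖ ^ 2) ^ n) := by
    refine CStarAlgebra.star_mul_le_algebraMap_norm_sq.trans (algebraMap_mono _ ?_)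
    calc ‖S ^ n‖ ^ 2 ≤ (‖S‖ ^ n) ^ 2 := by
          gcongr
          exact norm_pow_le' S (Nat.pos_of_ne_zero hn)
      _ = _ := by ring
  rw [h1]
  refine (star_left_conjugate_le_conjugate h2 (Q ^ n)).trans_eq ?_
  rw [Algebra.algebraMap_eq_smul_one, mul_smul_comm, mul_one, smul_mul_assoc]

theorem SotQuasinilpotent.mul_of_commute {S Q : H →L[ℂ] H} (hQ : SotQuasinilpotent Q)
    (h : Commute S Q) : SotQuasinilpotent (S * Q) := by
  intro ξ
  set A := fun n : ℕ => CFC.nnrpow ((ContinuousLinearMap.adjoint (S * Q)) ^ n * (S * Q) ^ n)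
    ((n : ℝ≥0)⁻¹) with hA
  set B := fun n : ℕ => CFC.nnrpow ((ContinuousLinearMap.adjoint Q) ^ n * Q ^ n)
    ((n : ℝ≥0)⁻¹) with hB
  have hlim : Filter.Tendsto
      (fun n => ‖S * Q‖ ^ 2 * (‖S‖ ^ 2 * RCLike.re (inner ℂ (B n ξ) ξ))) Filter.atTop (nhds 0) := by
    have h1 : Filter.Tendsto (fun n => inner ℂ (B n ξ) ξ) Filter.atTop (nhds (0 : ℂ)) := by
      have h0 : Filter.Tendsto (fun n => B n ξ) Filter.atTop (nhds 0) := hQ ξ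
      rw [← inner_zero_left (𝕜 := ℂ) ξ]
      exact h0.inner tendsto_const_nhds
    have h2 := (RCLike.continuous_re (K := ℂ)).continuousAt.tendsto.comp h1
    simpa using (h2.const_mul (‖S‖ ^ 2)).const_mul (‖S * Q‖ ^ 2)
  have hsq : Filter.Tendsto (fun n => ‖A n ξ‖ ^ 2) Filter.atTop (nhds 0) := by
    refine tendsto_of_tendsto_of_tendsto_of_le_of_le' tendsto_const_nhds hlim
      (.of_forall fun n => by positivity) ?_
    -- at `n = 0` the exponent `n⁻¹` is the junk value `0`
    filter_upwards [Filter.eventually_ne_atTop 0] with n hn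
    have hA0 : 0 ≤ A n := CFC.nnrpow_nonneg
    have hle : A n ≤ ‖S‖ ^ 2 • B n :=
      nnrpow_inv_le_smul (adjoint_pow_mul_pow_nonneg Q n) (by positivity) hn
        (adjoint_pow_mul_pow_le h hn)
    have hre : RCLike.re (inner ℂ (A n ξ) ξ) ≤ ‖S‖ ^ 2 * RCLike.re (inner ℂ (B n ξ) ξ) := by
      have := (ContinuousLinearMap.le_def _ _).1 hle |>.re_inner_nonneg_left ξ
      rw [_root_.sub_apply, inner_sub_left, map_sub, _root_.smul_apply,
        ← Complex.coe_smul, inner_smul_left, Complex.conj_ofReal, RCLike.re_eq_complex_re,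
        Complex.re_ofReal_mul] at this
      exact sub_nonneg.1 this
    have h0 : 0 ≤ RCLike.re (inner ℂ (A n ξ) ξ) :=
      ((ContinuousLinearMap.nonneg_iff_isPositive _).1 hA0).re_inner_nonneg_left ξ
    calc ‖A n ξ‖ ^ 2 ≤ ‖A n‖ * RCLike.re (inner ℂ (A n ξ) ξ) := norm_apply_sq_le_of_nonneg hA0 ξ
      _ ≤ _ := mul_le_mul (norm_nnrpow_adjoint_pow_le _ hn) hre h0 (by positivity)
  rw [tendsto_zero_iff_norm_tendsto_zero]
  change Filter.Tendsto (fun n => ‖A n ξ‖) Filter.atTop (nhds 0)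
  simpa only [Real.sqrt_zero, Real.sqrt_sq (norm_nonneg _)] using hsq.sqrt

lemma commute_aeval {R : Type*} [Ring R] [Algebra ℂ R] {x y : R} (h : Commute y x)
    (q : Polynomial ℂ) : Commute (Polynomial.aeval y q) x := by
  induction q using Polynomial.induction_on' with
  | add p q hp hq => rw [map_add]; exact hp.add_left hq
  | monomial n a =>
    rw [Polynomial.aeval_monomial]
    exact (Algebra.commute_algebraMap_left a _).mul_left (h.pow_left n)

/-- A polynomial difference factors through the difference of its commuting arguments. -/
lemma exists_aeval_sub_aeval_eq_mul {R : Type*} [Ring R] [Algebra ℂ R] {T N : R}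
    (h : Commute T N) (q : Polynomial ℂ) :
    ∃ S, Commute S (T - N) ∧ Polynomial.aeval T q - Polynomial.aeval N q = S * (T - N) := by
  induction q using Polynomial.induction_on' with
  | add p q hp hq =>
    obtain ⟨S, hS, hS'⟩ := hp
    obtain ⟨S', hS1, hS1'⟩ := hq
    refine ⟨S + S', hS.add_left hS1, ?_⟩
    rw [add_mul, ← hS', ← hS1', map_add, map_add]
    abel
  | monomial n a =>
    have hT : Commute T (T - N) := (Commute.refl T).sub_right h
    have hN : Commute N (T - N) := h.symm.sub_right (Commute.refl N)
    refine ⟨algebraMap ℂ R a * ∑ i ∈ Finset.range n, T ^ i * N ^ (n - 1 - i), ?_, ?_⟩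
    · refine (Algebra.commute_algebraMap_left a _).mul_left (Commute.sum_left _ _ _ fun i _ => ?_)
      exact (hT.pow_left i).mul_left (hN.pow_left _)
    · rw [Polynomial.aeval_monomial, Polynomial.aeval_monomial, mul_assoc, h.geom_sum₂_mul,
        mul_sub]

end

/-- Let `N, Q` be bounded operators on a complex Hilbert space with `NQ = QN` and `Q`
s.o.t.-quasinilpotent, and let `T = N + Q`. Then for every polynomial `q` with complex
coefficients, `q(T)` and `q(N)` commute and `q(T) - q(N)` is s.o.t.-quasinilpotent. -/
theorem stmt_8 {H : Type*} [NormedAddCommGroup H] [InnerProductSpace ℂ H] [CompleteSpace H]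
    (N Q : H →L[ℂ] H) (hNQ : N * Q = Q * N) (hQ : SotQuasinilpotent Q)
    (T : H →L[ℂ] H) (hT : T = N + Q) (q : Polynomial ℂ) :
    Commute (Polynomial.aeval T q) (Polynomial.aeval N q) ∧
    SotQuasinilpotent (Polynomial.aeval T q - Polynomial.aeval N q) := by
  have hTN : Commute T N := by
    rw [hT]
    exact (Commute.refl N).add_left (Commute.symm hNQ)
  have hsub : T - N = Q := by rw [hT, add_sub_cancel_left]
  constructor
  · exact commute_aeval (commute_aeval hTN.symm q).symm q
  · obtain ⟨S, hS, hS'⟩ := exists_aeval_sub_aeval_eq_mul hTN q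
    rw [hsub] at hS hS'
    rw [hS']
    exact hQ.mul_of_commute hS
end

section
/- Let H be a complex Hilbert space, let N and Q be bounded linear operators on H such that N is invertible, N⁻¹Q = QN⁻¹, and Q is s.o.t.-quasinilpotent. Then N⁻¹Q is s.o.t.-quasinilpotent, and N + Q = N(I + N⁻¹Q). -/
/-!
Put `M = N⁻¹`, `T = MQ`, `c = ‖M‖²`. As `M` and `Q` commute, `Tⁿ = MⁿQⁿ`, hence
`(T*)ⁿTⁿ = (Qⁿ)* (Mⁿ)*Mⁿ Qⁿ ≤ cⁿ (Q*)ⁿQⁿ`. The map `a ↦ a^{1/n}` is operator monotone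
(Löwner–Heinz), so with `Xₙ = ((T*)ⁿTⁿ)^{1/n}` and `Yₙ = ((Q*)ⁿQⁿ)^{1/n}` one gets
`0 ≤ Xₙ ≤ c Yₙ` (`root_mul_le`).

Order domination passes to strong convergence because `Xₙ² ≤ ‖Xₙ‖ Xₙ` gives
`‖Xₙ ξ‖² ≤ ‖Xₙ‖ ⟪Xₙ ξ, ξ⟫ ≤ ‖c Yₙ‖ ‖c Yₙ ξ‖ ‖ξ‖` (`norm_sq_apply_le`), and the norms `‖Yₙ‖` are
bounded by the uniform boundedness principle, as `Yₙ` converges pointwise.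
-/

open scoped NNReal

/-- The `n`-th root is homogeneous: `(cⁿ b)^{1/n} = c b^{1/n}`. -/
lemma smul_pow_nnrpow_inv {H : Type*} [NormedAddCommGroup H] [InnerProductSpace ℂ H]
    [CompleteSpace H] {b : H →L[ℂ] H} (hb : 0 ≤ b) {c : ℝ} (hc : 0 ≤ c) {n : ℕ} (hn : n ≠ 0) :
    (c ^ n • b) ^ ((n : ℝ≥0)⁻¹) = c • b ^ ((n : ℝ≥0)⁻¹) := by
  have hn' : (n : ℝ≥0) ≠ 0 := by exact_mod_cast hn
  have key : ∀ a : H →L[ℂ] H, 0 ≤ a → a ^ (n : ℝ≥0) = a ^ n := by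
    intro a ha
    rw [CFC.nnrpow_eq_rpow (pos_iff_ne_zero.2 hn')]
    simpa using CFC.rpow_natCast a n ha
  have hr : 0 ≤ b ^ ((n : ℝ≥0)⁻¹) := CFC.nnrpow_nonneg
  have h1 : 0 ≤ c • b ^ ((n : ℝ≥0)⁻¹) := smul_nonneg hc hr
  rw [CFC.nnrpow_inv_eq _ _ hn' (smul_nonneg (pow_nonneg hc n) hb) h1, key _ h1, smul_pow,
    ← key _ hr, CFC.nnrpow_inv_nnrpow b hn' hb]

lemma root_mul_le {H : Type*} [NormedAddCommGroup H] [InnerProductSpace ℂ H]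
    [CompleteSpace H] {M Q : H →L[ℂ] H} (h : Commute M Q) {n : ℕ} (hn : n ≠ 0) :
    (star (M * Q) ^ n * (M * Q) ^ n) ^ ((n : ℝ≥0)⁻¹) ≤
      ‖M‖ ^ 2 • (star Q ^ n * Q ^ n) ^ ((n : ℝ≥0)⁻¹) := by
  have hQ : 0 ≤ star Q ^ n * Q ^ n := by
    rw [← star_pow]; exact star_mul_self_nonneg _
  have hle : star (M * Q) ^ n * (M * Q) ^ n ≤ (‖M‖ ^ 2) ^ n • (star Q ^ n * Q ^ n) := by
    have hb : IsSelfAdjoint (star (M ^ n) * M ^ n) := .star_mul_self _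
    have h1 := CStarAlgebra.star_left_conjugate_le_norm_smul (a := Q ^ n) hb
    have h2 : ‖star (M ^ n) * M ^ n‖ ≤ (‖M‖ ^ 2) ^ n := by
      rw [CStarRing.norm_star_mul_self, ← pow_mul, mul_comm 2 n, pow_mul, ← sq]
      gcongr
      exact norm_pow_le' M (Nat.pos_of_ne_zero hn)
    calc star (M * Q) ^ n * (M * Q) ^ n
        = star (Q ^ n) * (star (M ^ n) * M ^ n) * Q ^ n := by
          rw [← star_pow, h.mul_pow, star_mul]; simp only [mul_assoc]
      _ ≤ _ := h1
      _ ≤ (‖M‖ ^ 2) ^ n • (star Q ^ n * Q ^ n) := by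
          rw [star_pow Q]; exact smul_le_smul_of_nonneg_right h2 hQ
  rw [← smul_pow_nnrpow_inv hQ (by positivity) hn]
  refine CFC.nnrpow_le_nnrpow ⟨by positivity, ?_⟩ hle
  exact inv_le_one_of_one_le₀ (by exact_mod_cast Nat.one_le_iff_ne_zero.mpr hn)

/-- Order domination controls the strong operator topology on norm-bounded sets. -/
lemma norm_sq_apply_le {H : Type*} [NormedAddCommGroup H] [InnerProductSpace ℂ H]
    [CompleteSpace H] {X Y : H →L[ℂ] H} (hX : 0 ≤ X) (hXY : X ≤ Y) (ξ : H) :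
    ‖X ξ‖ ^ 2 ≤ ‖Y‖ * (‖Y ξ‖ * ‖ξ‖) := by
  have hsa : IsSelfAdjoint X := .of_nonneg hX
  have hsq : X * X ≤ ‖X‖ • X := by
    -- conjugating `X` by its square root gives `X²`
    have h := CStarAlgebra.star_left_conjugate_le_norm_smul (a := CFC.sqrt X) hsa
    have hs : star (CFC.sqrt X) = CFC.sqrt X := (IsSelfAdjoint.of_nonneg (CFC.sqrt_nonneg X)).star_eq
    have hm : CFC.sqrt X * CFC.sqrt X = X := CFC.sqrt_mul_sqrt_self X hX
    have e : CFC.sqrt X * X * CFC.sqrt X = X * X := by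
      have hc : Commute (CFC.sqrt X) X := by
        have := (Commute.refl (CFC.sqrt X)).mul_right (Commute.refl (CFC.sqrt X))
        rwa [hm] at this
      rw [hc.eq, mul_assoc, hm]
    rwa [hs, e, hm] at h
  have mono : ∀ {A B : H →L[ℂ] H}, A ≤ B →
      RCLike.re (inner ℂ (A ξ) ξ) ≤ RCLike.re (inner ℂ (B ξ) ξ) := by
    intro A B hAB
    have := ((ContinuousLinearMap.le_def A B).1 hAB).re_inner_nonneg_left ξ
    simpa [inner_sub_left] using this
  have e1 : RCLike.re (inner ℂ ((X * X) ξ) ξ) = ‖X ξ‖ ^ 2 := by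
    have := ContinuousLinearMap.adjoint_inner_left X ξ (X ξ)
    rw [← ContinuousLinearMap.star_eq_adjoint, hsa.star_eq] at this
    rw [mul_apply_eq_comp, this, inner_self_eq_norm_sq]
  have e2 : RCLike.re (inner ℂ ((‖X‖ • X) ξ) ξ) = ‖X‖ * RCLike.re (inner ℂ (X ξ) ξ) := by
    rw [_root_.smul_apply, inner_smul_left_eq_smul]
    simp
  have h3 : RCLike.re (inner ℂ (Y ξ) ξ) ≤ ‖Y ξ‖ * ‖ξ‖ := re_inner_le_norm _ _
  have h4 : ‖X‖ ≤ ‖Y‖ := CStarAlgebra.norm_le_norm_of_nonneg_of_le hX hXY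
  calc ‖X ξ‖ ^ 2 ≤ ‖X‖ * RCLike.re (inner ℂ (X ξ) ξ) := by
        rw [← e1, ← e2]; exact mono hsq
    _ ≤ ‖X‖ * (‖Y ξ‖ * ‖ξ‖) := by gcongr; exact (mono hXY).trans h3
    _ ≤ ‖Y‖ * (‖Y ξ‖ * ‖ξ‖) := by gcongr

lemma SotQuasinilpotent.mul_left {H : Type*} [NormedAddCommGroup H] [InnerProductSpace ℂ H]
    [CompleteSpace H] {M Q : H →L[ℂ] H} (h : Commute M Q) (hQ : SotQuasinilpotent Q) :
    SotQuasinilpotent (M * Q) := by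
  set Y : ℕ → H →L[ℂ] H := fun n => (star Q ^ n * Q ^ n) ^ ((n : ℝ≥0)⁻¹) with hY
  have hYt : ∀ ξ, Filter.Tendsto (fun n => Y n ξ) Filter.atTop (nhds 0) := hQ
  obtain ⟨C, hC⟩ : ∃ C, ∀ n, ‖Y n‖ ≤ C := by
    refine banach_steinhaus fun ξ => ?_
    obtain ⟨C, hC⟩ := (hYt ξ).norm.bddAbove_range
    exact ⟨C, fun n => hC ⟨n, rfl⟩⟩
  intro ξ
  set X : ℕ → H →L[ℂ] H := fun n => (star (M * Q) ^ n * (M * Q) ^ n) ^ ((n : ℝ≥0)⁻¹) with hX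
  change Filter.Tendsto (fun n => X n ξ) Filter.atTop (nhds 0)
  set c : ℝ := ‖M‖ ^ 2 with hc
  have hc0 : 0 ≤ c := by positivity
  have hbound : ∀ᶠ n in Filter.atTop,
      ‖X n ξ‖ ^ 2 ≤ (c * C) * ((c * ‖Y n ξ‖) * ‖ξ‖) := by
    filter_upwards [Filter.eventually_ne_atTop 0] with n hn
    have h1 := norm_sq_apply_le (X := X n) (Y := c • Y n) CFC.nnrpow_nonneg (root_mul_le h hn) ξ
    rw [_root_.smul_apply, norm_smul, norm_smul, Real.norm_of_nonneg hc0] at h1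
    refine h1.trans ?_
    gcongr
    exact hC n
  have hlim : Filter.Tendsto (fun n => (c * C) * ((c * ‖Y n ξ‖) * ‖ξ‖)) Filter.atTop (nhds 0) := by
    simpa using (((hYt ξ).norm.const_mul c).mul_const ‖ξ‖).const_mul (c * C)
  have hsq : Filter.Tendsto (fun n => ‖X n ξ‖ ^ 2) Filter.atTop (nhds 0) :=
    squeeze_zero' (.of_forall fun n => by positivity) hbound hlim
  rw [tendsto_zero_iff_norm_tendsto_zero]
  simpa using hsq.sqrt

/-- Let `N, Q` be bounded operators on a complex Hilbert space such that `N` is invertible,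
`N⁻¹Q = QN⁻¹`, and `Q` is s.o.t.-quasinilpotent. Then `N⁻¹Q` is s.o.t.-quasinilpotent and
`N + Q = N(I + N⁻¹Q)`. -/
theorem stmt_15 {H : Type*} [NormedAddCommGroup H] [InnerProductSpace ℂ H] [CompleteSpace H]
    (N Q : H →L[ℂ] H) (hN : IsUnit N)
    (hcomm : Ring.inverse N * Q = Q * Ring.inverse N) (hQ : SotQuasinilpotent Q) :
    SotQuasinilpotent (Ring.inverse N * Q) ∧
    N + Q = N * (1 + Ring.inverse N * Q) := by
  refine ⟨hQ.mul_left hcomm, ?_⟩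
  rw [mul_add, mul_one, ← mul_assoc, Ring.mul_inverse_cancel N hN, one_mul]
end
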